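/- For all d ≥ 1 and n ≥ 1, the minimal t such that there exists a t×n d-disjunct binary matrix satisfies t(d,n) ≥ min{ ((15+√33)/24)·d², n }. -/

import Mathlib

open Finset

/-- A family of columns (each column = the finset of rows where it has a 1)
is `d`-disjunct if no column is contained in the union of `≤ d` other columns. -/
def Disjunct {ι ρ : Type*} [DecidableEq ρ] (d : ℕ) (col : ι → Finset ρ) : Prop :=
  ∀ j : ι, ∀ S : Finset ι, j ∉ S → S.card ≤ d → ¬ col j ⊆ S.biUnion col

/-- A column `j` is isolated if it contains a row belonging to no other column. -/
def IsolatedCol {ι ρ : Type*} (col : ι → Finset ρ) (j : ι) : Prop :=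
  ∃ i ∈ col j, ∀ j', i ∈ col j' → j' = j

/-- `tmin d n` is the minimal `t` such that a `t × n` `d`-disjunct matrix exists. -/
noncomputable def tmin (d n : ℕ) : ℕ :=
  sInf {t : ℕ | ∃ col : Fin n → Finset (Fin t), Disjunct d col}

section Aux
open Classical

/-- `σ` is a fixed-point-free pairing of `S` along `adj`. -/
def MatOn {V : Type*} (adj : V → V → Prop) (σ : V → V) (S : Finset V) : Prop :=
  ∀ v ∈ S, σ v ∈ S ∧ σ (σ v) = v ∧ adj v (σ v)

def IsMat {V : Type*} (adj : V → V → Prop) (S : Finset V) : Prop :=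
  ∃ σ : V → V, MatOn adj σ S

lemma MatOn.sub {V : Type*} {adj : V → V → Prop} {σ : V → V} {S : Finset V}
    (h : MatOn adj σ S) {v : V} (hv : v ∈ S) : MatOn adj σ (S \ {v, σ v}) := by
  intro x hx
  simp only [mem_sdiff, mem_insert, mem_singleton, not_or] at hx ⊢
  obtain ⟨hxS, h1, h2⟩ := hx
  obtain ⟨a1, a2, a3⟩ := h x hxS
  obtain ⟨b1, b2, b3⟩ := h v hv
  refine ⟨⟨a1, ?_, ?_⟩, a2, a3⟩
  · intro e; apply h2; rw [← e, a2]
  · intro e; apply h1; rw [← a2, e, b2]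

lemma IsMat.add {V : Type*} {adj : V → V → Prop} (hs : ∀ x y, adj x y → adj y x)
    {S : Finset V} (h : IsMat adj S) {x y : V} (hx : x ∉ S) (hy : y ∉ S)
    (hxy : adj x y) : IsMat adj (insert x (insert y S)) := by
  obtain ⟨σ, h⟩ := h
  refine ⟨fun z => if z = x then y else if z = y then x else σ z, ?_⟩
  intro v hv
  have hyx := hs _ _ hxy
  by_cases h1 : v = x
  · subst h1
    by_cases h2 : y = v
    · subst h2; simp [hxy]
    · simp [hxy, h2]
  · by_cases h2 : v = y
    · subst h2; simp [h1, hyx]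
    · have hvS : v ∈ S := by simpa [h1, h2] using hv
      obtain ⟨a1, a2, a3⟩ := h v hvS
      have n1 : σ v ≠ x := fun e => hx (e ▸ a1)
      have n2 : σ v ≠ y := fun e => hy (e ▸ a1)
      simp [h1, h2, n1, n2, a1, a2, a3]

/-- number of ordered adjacent pairs -/
noncomputable def ee {V : Type*} (adj : V → V → Prop) (X Y : Finset V) : ℕ :=
  ∑ x ∈ X, (Y.filter (fun y => adj x y)).card

lemma ee_comm {V : Type*} {adj : V → V → Prop} (hs : ∀ x y, adj x y → adj y x)
    (X Y : Finset V) : ee adj X Y = ee adj Y X := by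
  unfold ee
  simp only [card_filter]
  rw [sum_comm]
  refine sum_congr rfl fun y _ => sum_congr rfl fun x _ => ?_
  have : adj x y ↔ adj y x := ⟨hs _ _, hs _ _⟩
  simp [this]

lemma ee_union_left {V : Type*} {adj : V → V → Prop} {X X' : Finset V} (Y : Finset V)
    (h : Disjoint X X') : ee adj (X ∪ X') Y = ee adj X Y + ee adj X' Y := sum_union h

lemma ee_union_right {V : Type*} {adj : V → V → Prop} (hs : ∀ x y, adj x y → adj y x)
    {X X' : Finset V} (Y : Finset V)
    (h : Disjoint X X') : ee adj Y (X ∪ X') = ee adj Y X + ee adj Y X' := by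
  rw [ee_comm hs, ee_union_left _ h, ee_comm hs X, ee_comm hs X']

lemma ee_le {V : Type*} {adj : V → V → Prop} {X Y : Finset V} (q : ℕ)
    (h : ∀ x ∈ X, (Y.filter (fun y => adj x y)).card ≤ q) : ee adj X Y ≤ X.card * q := by
  unfold ee
  simpa using sum_le_card_nsmul X _ q h

lemma ee_le_mul {V : Type*} {adj : V → V → Prop} (X Y : Finset V) :
    ee adj X Y ≤ X.card * Y.card := ee_le _ fun _ _ => card_filter_le _ _

lemma ee_self {V : Type*} {adj : V → V → Prop} (hi : ∀ x, ¬ adj x x) (X : Finset V) :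
    ee adj X X ≤ X.card * (X.card - 1) := by
  refine ee_le _ fun x hx => ?_
  rw [← card_erase_of_mem hx]
  refine card_le_card fun y hy => ?_
  simp only [mem_filter, mem_erase] at hy ⊢
  exact ⟨fun e => hi x (e ▸ hy.2), hy.1⟩

lemma ee_zero {V : Type*} {adj : V → V → Prop} {X Y : Finset V}
    (h : ∀ x ∈ X, ∀ y ∈ Y, ¬ adj x y) : ee adj X Y = 0 := by
  unfold ee
  refine sum_eq_zero fun x hx => ?_
  rw [card_eq_zero, filter_eq_empty_iff]
  exact fun y hy => h x hx y hy

lemma EG {V : Type*} (C : Finset V) (adj : V → V → Prop) (hs : ∀ x y, adj x y → adj y x)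
    (hi : ∀ x, ¬ adj x x) :
    ∃ S ⊆ C, IsMat adj S ∧ ∃ k r : ℕ, k + k + r = S.card ∧
      ee adj C C ≤ k * (C.card - 1) + k * (C.card - k) + r * (r - 1) + r * (k + 1)
        + 2 * r := by
  have hne : (C.powerset.filter (fun S => IsMat adj S)).Nonempty :=
    ⟨∅, mem_filter.2 ⟨by simp, ⟨id, fun v hv => absurd hv (notMem_empty v)⟩⟩⟩
  obtain ⟨S, hS, hmax⟩ := exists_max_image _ Finset.card hne
  simp only [mem_filter, mem_powerset] at hS hmax
  obtain ⟨hSC, hSM⟩ := hS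
  refine ⟨S, hSC, hSM, ?_⟩
  obtain ⟨σ, hσ⟩ := hSM
  -- contradiction principle
  have key : ∀ S' u, S' ⊆ C → IsMat adj S' → u ∉ S → insert u S ⊆ S' → False := by
    intro S' u h1 h2 h3 h4
    have := hmax S' ⟨h1, h2⟩
    have := card_le_card h4
    rw [card_insert_of_notMem h3] at this
    omega
  set U := C \ S with hU
  have memU : ∀ u, u ∈ U ↔ u ∈ C ∧ u ∉ S := fun u => mem_sdiff
  set A := S.filter (fun v => 2 ≤ (U.filter (fun u => adj v u)).card) with hA
  have hAS : A ⊆ S := filter_subset _ _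
  have pick : ∀ a ∈ A, ∀ u, ∃ v ∈ U, v ≠ u ∧ adj a v := by
    intro a ha u
    have h2 := (mem_filter.1 ha).2
    obtain ⟨v, hv, hvu⟩ := exists_mem_ne (by omega : 1 < (U.filter (fun u => adj a u)).card) u
    rw [mem_filter] at hv
    exact ⟨v, hv.1, hvu, hv.2⟩
  have sne : ∀ v ∈ S, σ v ≠ v := fun v hv e => hi v (by
    have := (hσ v hv).2.2; rwa [e] at this)
  have f1 : ∀ u ∈ U, ∀ v ∈ U, ¬ adj u v := by
    intro u hu v hv huv
    rw [memU] at hu hv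
    refine key _ u ?_ (IsMat.add hs ⟨σ, hσ⟩ hu.2 hv.2 huv) hu.2 ?_
    · intro z; simp only [mem_insert]; rintro (rfl | rfl | h); exacts [hu.1, hv.1, hSC h]
    · intro z; simp only [mem_insert]; tauto
  have f2 : ∀ a ∈ A, ∀ u ∈ U, ¬ adj (σ a) u := by
    intro a ha u hu hau
    obtain ⟨v, hv, hvu, hav⟩ := pick a ha u
    have haS := hAS ha
    obtain ⟨p1, p2, p3⟩ := hσ a haS
    have := sne a haS
    rw [memU] at hu hv
    have m1 : IsMat adj (S \ {a, σ a}) := ⟨σ, hσ.sub haS⟩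
    have m2 := m1.add hs (x := σ a) (y := u) (by simp) (by simp [hu.2]) hau
    have m3 := m2.add hs (x := a) (y := v) (by
      simp only [mem_insert, mem_sdiff, mem_singleton]; grind) (by
      simp only [mem_insert, mem_sdiff, mem_singleton]; grind) hav
    refine key _ u ?_ m3 hu.2 ?_
    · intro z; simp only [mem_insert, mem_sdiff, mem_singleton]; grind
    · intro z; simp only [mem_insert, mem_sdiff, mem_singleton]; grind
  set B := A.image σ with hB
  have hBS : B ⊆ S := by
    intro b hb
    obtain ⟨a, ha, rfl⟩ := mem_image.1 hb
    exact (hσ a (hAS ha)).1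
  have hAB : Disjoint A B := by
    rw [disjoint_left]
    intro b hbA hb
    obtain ⟨a, ha, rfl⟩ := mem_image.1 hb
    obtain ⟨v, hv, _, h⟩ := pick _ hbA a
    exact f2 a ha v hv h
  have hBk : B.card = A.card := by
    refine card_image_of_injOn fun x hx y hy e => ?_
    rw [← (hσ x (hAS hx)).2.1, ← (hσ y (hAS hy)).2.1, e]
  have f3 : ∀ b ∈ B, ∀ b' ∈ B, ¬ adj b b' := by
    intro b hb b' hb' hbb
    obtain ⟨a, ha, rfl⟩ := mem_image.1 hb
    obtain ⟨a', ha', rfl⟩ := mem_image.1 hb'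
    obtain ⟨u, hu, -, hau⟩ := pick a ha a
    obtain ⟨v, hv, hvu, hav⟩ := pick a' ha' u
    have haS := hAS ha
    have haS' := hAS ha'
    obtain ⟨p1, p2, p3⟩ := hσ a haS
    obtain ⟨q1, q2, q3⟩ := hσ a' haS'
    have s1 := sne a haS
    have s2 := sne a' haS'
    have n0 : σ a ≠ σ a' := fun e => hi _ (e ▸ hbb)
    have n1 : a ≠ a' := fun e => n0 (by rw [e])
    have n2 : a ≠ σ a' := fun e => (disjoint_left.1 hAB) ha (e ▸ hb')
    have n3 : a' ≠ σ a := fun e => (disjoint_left.1 hAB) ha' (e ▸ hb)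
    rw [memU] at hu hv
    have m1 : IsMat adj ((S \ {a, σ a}) \ {a', σ a'}) :=
      ⟨σ, (hσ.sub haS).sub (by simp [haS', n1.symm, n3])⟩
    have m2 := m1.add hs (x := σ a) (y := σ a') (by simp) (by simp) hbb
    have m3 := m2.add hs (x := a) (y := u) (by
      simp only [mem_insert, mem_sdiff, mem_singleton]; grind) (by
      simp only [mem_insert, mem_sdiff, mem_singleton]; grind) hau
    have m4 := m3.add hs (x := a') (y := v) (by
      simp only [mem_insert, mem_sdiff, mem_singleton]; grind) (by
      simp only [mem_insert, mem_sdiff, mem_singleton]; grind) hav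
    refine key _ u ?_ m4 hu.2 ?_
    · intro z; simp only [mem_insert, mem_sdiff, mem_singleton]; grind
    · intro z; simp only [mem_insert, mem_sdiff, mem_singleton]; grind
  set R := (S \ A) \ B with hR
  have memR : ∀ r, r ∈ R ↔ (r ∈ S ∧ r ∉ A) ∧ r ∉ B := fun r => by simp [hR]
  have hRσ : ∀ r ∈ R, σ r ∈ R := by
    intro r hr
    rw [memR] at hr ⊢
    obtain ⟨⟨h1, h2⟩, h3⟩ := hr
    obtain ⟨p1, p2, p3⟩ := hσ r h1
    refine ⟨⟨p1, fun h => h3 ?_⟩, fun h => h2 ?_⟩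
    · exact mem_image.2 ⟨_, h, p2⟩
    · obtain ⟨a, ha, e⟩ := mem_image.1 h
      have : a = r := by rw [← (hσ a (hAS ha)).2.1, e, p2]
      exact this ▸ ha
  have f4 : ∀ r ∈ R, ∀ b ∈ B, ∀ b' ∈ B, adj r b → adj (σ r) b' → b = b' := by
    intro r hr b hb b' hb' h1 h2
    by_contra n0
    have hr' := hRσ r hr
    rw [memR] at hr hr'
    obtain ⟨a, ha, rfl⟩ := mem_image.1 hb
    obtain ⟨a', ha', rfl⟩ := mem_image.1 hb'
    obtain ⟨u, hu, -, hau⟩ := pick a ha a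
    obtain ⟨v, hv, hvu, hav⟩ := pick a' ha' u
    have haS := hAS ha
    have haS' := hAS ha'
    obtain ⟨p1, p2, p3⟩ := hσ a haS
    obtain ⟨q1, q2, q3⟩ := hσ a' haS'
    obtain ⟨t1, t2, t3⟩ := hσ r hr.1.1
    have s1 := sne a haS
    have s2 := sne a' haS'
    have s3 := sne r hr.1.1
    have n1 : a ≠ a' := fun e => n0 (by rw [e])
    have n2 : a ≠ σ a' := fun e => (disjoint_left.1 hAB) ha (e ▸ hb')
    have n3 : a' ≠ σ a := fun e => (disjoint_left.1 hAB) ha' (e ▸ hb)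
    have n4 : r ≠ a := fun e => hr.1.2 (e ▸ ha)
    have n5 : r ≠ a' := fun e => hr.1.2 (e ▸ ha')
    have n6 : r ≠ σ a := fun e => hr.2 (e ▸ hb)
    have n7 : r ≠ σ a' := fun e => hr.2 (e ▸ hb')
    have n8 : σ r ≠ a := fun e => hr'.1.2 (e ▸ ha)
    have n9 : σ r ≠ a' := fun e => hr'.1.2 (e ▸ ha')
    have n10 : σ r ≠ σ a := fun e => hr'.2 (e ▸ hb)
    have n11 : σ r ≠ σ a' := fun e => hr'.2 (e ▸ hb')
    have hrS := hr.1.1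
    clear hr hr' hb hb' ha ha'
    rw [memU] at hu hv
    clear_value U A B R
    have m1 : IsMat adj (((S \ {a, σ a}) \ {a', σ a'}) \ {r, σ r}) :=
      ⟨σ, ((hσ.sub haS).sub (by simp [haS', n1.symm, n3])).sub (by simp [*])⟩
    have m2 := m1.add hs (x := r) (y := σ a) (by simp) (by simp) h1
    have m3 := m2.add hs (x := σ r) (y := σ a') (by
      simp only [mem_insert, mem_sdiff, mem_singleton]; grind) (by
      simp only [mem_insert, mem_sdiff, mem_singleton]; grind) h2
    have m4 := m3.add hs (x := a) (y := u) (by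
      simp only [mem_insert, mem_sdiff, mem_singleton]; grind) (by
      simp only [mem_insert, mem_sdiff, mem_singleton]; grind) hau
    have m5 := m4.add hs (x := a') (y := v) (by
      simp only [mem_insert, mem_sdiff, mem_singleton]; grind) (by
      simp only [mem_insert, mem_sdiff, mem_singleton]; grind) hav
    refine key _ u ?_ m5 hu.2 ?_
    · intro z; simp only [mem_insert, mem_sdiff, mem_singleton]; grind
    · intro z; simp only [mem_insert, mem_sdiff, mem_singleton]; grind
  -- counting
  have hSeq : S = (A ∪ B) ∪ R := by
    ext z; simp only [mem_union, memR]
    have := @hAS z; have := @hBS z; tauto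
  have hABR : Disjoint (A ∪ B) R := by
    rw [disjoint_left]; intro z; rw [mem_union, memR]; tauto
  have hSU : Disjoint S U := disjoint_sdiff
  have hCeq : C = S ∪ U := (union_sdiff_of_subset hSC).symm
  have cS : A.card + A.card + R.card = S.card := by
    rw [hSeq, card_union_of_disjoint hABR, card_union_of_disjoint hAB, hBk]
  have cC : C.card = S.card + U.card := by rw [hCeq, card_union_of_disjoint hSU]
  refine ⟨A.card, R.card, cS, ?_⟩
  have hRB : 2 * ee adj R B ≤ R.card * (A.card + 1) := by
    have e1 : ∑ r ∈ R, (B.filter (fun y => adj (σ r) y)).card = ee adj R B := by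
      unfold ee
      refine sum_nbij' σ σ hRσ hRσ ?_ ?_ ?_
      · intro r hr; exact (hσ r ((memR r).1 hr).1.1).2.1
      · intro r hr; exact (hσ r ((memR r).1 hr).1.1).2.1
      · intro r hr; rfl
    have : 2 * ee adj R B = ∑ r ∈ R, ((B.filter (fun y => adj r y)).card
        + (B.filter (fun y => adj (σ r) y)).card) := by
      rw [sum_add_distrib, e1]; unfold ee; ring
    rw [this]
    refine (sum_le_card_nsmul R _ (A.card + 1) fun r hr => ?_).trans (by simp)
    have hX := card_filter_le B (fun y => adj r y)
    have hY := card_filter_le B (fun y => adj (σ r) y)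
    rw [hBk] at hX hY
    rcases (B.filter (fun y => adj r y)).eq_empty_or_nonempty with h | ⟨x, hx⟩
    · rw [h, card_empty]; omega
    rcases (B.filter (fun y => adj (σ r) y)).eq_empty_or_nonempty with h' | ⟨y, hy⟩
    · rw [h', card_empty]; omega
    have k1 : 0 < A.card := by
      rw [← hBk]; exact card_pos.2 ⟨x, (mem_filter.1 hx).1⟩
    rw [mem_filter] at hx hy
    have c1 : (B.filter (fun y => adj r y)).card ≤ 1 := by
      rw [card_le_one]
      intro p hp q hq
      rw [mem_filter] at hp hq
      rw [f4 r hr p hp.1 y hy.1 hp.2 hy.2, f4 r hr q hq.1 y hy.1 hq.2 hy.2]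
    have c2 : (B.filter (fun y => adj (σ r) y)).card ≤ 1 := by
      rw [card_le_one]
      intro p hp q hq
      rw [mem_filter] at hp hq
      rw [← f4 r hr x hx.1 p hp.1 hx.2 hp.2, ← f4 r hr x hx.1 q hq.1 hx.2 hq.2]
    omega
  have hRU : ee adj R U ≤ R.card * 1 := by
    refine ee_le 1 fun r hr => ?_
    rw [memR, hA, mem_filter] at hr
    have : ¬ 2 ≤ (U.filter (fun u => adj r u)).card := fun h => hr.1.2 ⟨hr.1.1, h⟩
    omega
  have hAC : ee adj A C ≤ A.card * (C.card - 1) := by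
    refine ee_le _ fun x hx => ?_
    rw [← card_erase_of_mem (hSC (hAS hx))]
    refine card_le_card fun y hy => ?_
    simp only [mem_filter, mem_erase] at hy ⊢
    exact ⟨fun e => hi x (e ▸ hy.2), hy.1⟩
  have hBB : ee adj B B = 0 := ee_zero f3
  have hUU : ee adj U U = 0 := ee_zero f1
  have hBU : ee adj B U = 0 := ee_zero (by
    intro b hb u hu
    obtain ⟨a, ha, rfl⟩ := mem_image.1 hb
    exact f2 a ha u hu)
  have hRR := ee_self hi R
  have hBA := ee_le_mul (adj := adj) B A
  have hRA := ee_le_mul (adj := adj) R A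
  have hUA := ee_le_mul (adj := adj) U A
  have expand : ee adj C C = ee adj A C
      + (ee adj B A + ee adj B B + ee adj B R + ee adj B U)
      + (ee adj R A + ee adj R B + ee adj R R + ee adj R U)
      + (ee adj U A + ee adj U B + ee adj U R + ee adj U U) := by
    have l : ∀ Y, ee adj C Y = ee adj A Y + ee adj B Y + ee adj R Y + ee adj U Y := by
      intro Y
      rw [hCeq, ee_union_left _ hSU, hSeq, ee_union_left _ hABR, ee_union_left _ hAB]
    have l' : ∀ Y, ee adj Y C = ee adj Y A + ee adj Y B + ee adj Y R + ee adj Y U := by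
      intro Y
      rw [ee_comm hs, l, ee_comm hs A, ee_comm hs B, ee_comm hs R, ee_comm hs U]
    rw [l C, l' B, l' R, l' U]
  rw [ee_comm hs U B, ee_comm hs U R, ee_comm hs B R] at expand
  have hfin : B.card * A.card + R.card * A.card + U.card * A.card
      = A.card * (C.card - A.card) := by
    have : C.card - A.card = A.card + R.card + U.card := by omega
    rw [this, hBk]; ring
  rw [expand]
  linarith

lemma numeric (c d w s k r : ℝ) (hc : 12 * c ^ 2 - 15 * c + 4 = 0) (hc1 : 0.86 ≤ c)
    (hc2 : c ≤ 0.87) (hd : 1 ≤ d) (hk : 0 ≤ k) (hr : 0 ≤ r) (hkr : k + k + r = s)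
    (hs : 2 * (d + 1) ≤ 2 * w - s) (hw : w ≤ 2 * c * d - c) :
    c * d ^ 2 ≤ w * (w - 1) - (k * (w - 1) + k * (w - k) + r * (r - 1) + r * (k + 1)
        + 2 * r) := by
  obtain ⟨m, rfl⟩ : ∃ m, s = 2 * m := ⟨s / 2, by ring⟩
  obtain rfl : r = 2 * (m - k) := by linarith
  have hm : 0 ≤ m := by linarith
  have hkm : k ≤ m := by linarith
  -- convexity in k
  have conv : k * (w - 1) + k * (w - k) + 2 * (m - k) * (2 * (m - k) - 1)
      + 2 * (m - k) * (k + 1) + 2 * (2 * (m - k)) ≤ max (4 * m ^ 2 + 4 * m)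
        (m * (2 * w - 1 - m)) := by
    rcases hm.eq_or_lt with h0 | hpos
    · have : k = 0 := by linarith
      subst this; rw [← h0]; simp
    · have key : m * (k * (w - 1) + k * (w - k) + 2 * (m - k) * (2 * (m - k) - 1)
      + 2 * (m - k) * (k + 1) + 2 * (2 * (m - k))) ≤ m * max (4 * m ^ 2 + 4 * m)
        (m * (2 * w - 1 - m)) := by
        have a := mul_le_mul_of_nonneg_left
          (le_max_left (4 * m ^ 2 + 4 * m) (m * (2 * w - 1 - m))) (sub_nonneg.2 hkm)
        have b := mul_le_mul_of_nonneg_left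
          (le_max_right (4 * m ^ 2 + 4 * m) (m * (2 * w - 1 - m))) hk
        have e : 0 ≤ m * k * (m - k) := by
          have := sub_nonneg.2 hkm; positivity
        nlinarith
      exact le_of_mul_le_mul_left key hpos
  rcases max_choice (4 * m ^ 2 + 4 * m) (m * (2 * w - 1 - m)) with h | h
  · rw [h] at conv
    have hM : m ≤ w - d - 1 := by linarith
    obtain ⟨q, rfl⟩ : ∃ q, w = d + 1 + q := ⟨w - d - 1, by ring⟩
    have hmq : m ≤ q := by linarith
    have h1 : 4 * m ^ 2 + 4 * m ≤ 4 * q ^ 2 + 4 * q := by nlinarith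
    have hq0 : 0 ≤ q := by linarith
    have hqM : q ≤ (2 * c - 1) * d - c - 1 := by linarith
    -- concave
    have h2 : c * d ^ 2 ≤ d ^ 2 + d + 2 * d * q - 3 * q - 3 * q ^ 2 := by
      set M := (2 * c - 1) * d - c - 1 with hMdef
      have hd2 : 2 ≤ d := by nlinarith
      have end0 : 0 ≤ d ^ 2 + d - c * d ^ 2 := by nlinarith
      have endM : 0 ≤ d ^ 2 + d + 2 * d * M - 3 * M - 3 * M ^ 2 - c * d ^ 2 := by
        have : d ^ 2 + d + 2 * d * M - 3 * M - 3 * M ^ 2 - c * d ^ 2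
            = (1 - 2 * (c + 1) - 3 * (2 * c - 1) + 6 * (2 * c - 1) * (c + 1)) * d
              + 3 * (c + 1) - 3 * (c + 1) ^ 2 := by
          rw [hMdef]; linear_combination (-d ^ 2) * hc
        rw [this]
        have : 3 ≤ 1 - 2 * (c + 1) - 3 * (2 * c - 1) + 6 * (2 * c - 1) * (c + 1) := by
          nlinarith
        nlinarith
      rcases hq0.eq_or_lt with h0 | hpos
      · rw [← h0]; nlinarith
      · have hMp : 0 < M := by linarith
        have h3 : 0 ≤ M * (d ^ 2 + d + 2 * d * q - 3 * q - 3 * q ^ 2 - c * d ^ 2) := by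
          have a := mul_nonneg end0 (sub_nonneg.2 hqM)
          have b := mul_nonneg endM hq0
          have e : 0 ≤ M * q * (M - q) := by
            have := sub_nonneg.2 hqM; positivity
          clear_value M
          nlinarith
        have := nonneg_of_mul_nonneg_right h3 hMp
        linarith
    nlinarith
  · rw [h] at conv
    have h1 : d + 1 ≤ w - m := by linarith
    have h2 : (d + 1) * d ≤ (w - m) * (w - m - 1) := by nlinarith
    nlinarith

def DJ {ι ρ : Type*} (col : ι → Finset ρ) (d : ℕ) (J : Finset ι) (T : Finset ρ) : Prop :=
  ∀ j ∈ J, ∀ S ⊆ J, j ∉ S → S.card ≤ d → ∃ x ∈ T, x ∈ col j ∧ ∀ s ∈ S, x ∉ col s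

def Sh {ι ρ : Type*} (col : ι → Finset ρ) (J : Finset ι) (j : ι) (x y : ρ) : Prop :=
  x ≠ y ∧ ∃ f ∈ J, f ≠ j ∧ x ∈ col f ∧ y ∈ col f

lemma cover {ι ρ : Type*} (col : ι → Finset ρ) (J : Finset ι) (j : ι) (σ : ρ → ρ) :
    ∀ S : Finset ρ, MatOn (Sh col J j) σ S →
      ∃ F ⊆ J, j ∉ F ∧ 2 * F.card ≤ S.card ∧ ∀ x ∈ S, ∃ f ∈ F, x ∈ col f := by
  intro S
  induction S using Finset.strongInduction with
  | H S ih =>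
    intro h
    rcases S.eq_empty_or_nonempty with rfl | ⟨v, hv⟩
    · exact ⟨∅, by simp⟩
    · obtain ⟨p1, p2, p3, f, hf, hfj, hf1, hf2⟩ := h v hv
      have hsub : ({v, σ v} : Finset ρ) ⊆ S := by
        intro z; simp only [mem_insert, mem_singleton]; rintro (rfl | rfl) <;> assumption
      obtain ⟨F, hF, hjF, hcard, hcov⟩ := ih (S \ {v, σ v})
        (sdiff_ssubset hsub ⟨v, by simp⟩) (h.sub hv)
      rw [card_sdiff_of_subset hsub, card_pair p3] at hcard
      have h2 : 2 ≤ S.card := by rw [← card_pair p3]; exact card_le_card hsub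
      refine ⟨insert f F, insert_subset hf hF, ?_, ?_, ?_⟩
      · simp [hjF, hfj.symm]
      · have := card_insert_le f F; omega
      · intro x hx
        by_cases hx' : x = v ∨ x = σ v
        · exact ⟨f, by simp, by rcases hx' with rfl | rfl <;> assumption⟩
        · obtain ⟨g, hg, hxg⟩ := hcov x (by simp [hx] at hx' ⊢; exact hx')
          exact ⟨g, by simp [hg], hxg⟩

lemma light {ι ρ : Type*} (col : ι → Finset ρ) (d : ℕ) (hd : 1 ≤ d) (J : Finset ι)
    (T : Finset ρ) (hD : DJ col d J T)
    (hiso : ∀ j ∈ J, ∀ x ∈ T, x ∈ col j → ∃ f ∈ J, f ≠ j ∧ x ∈ col f)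
    (c : ℝ) (hc : 12 * c ^ 2 - 15 * c + 4 = 0) (hc1 : 0.86 ≤ c)
    (hc2 : c ≤ 0.87) (j : ι) (hj : j ∈ J) (C : Finset ρ) (hC : C = T.filter (· ∈ col j))
    (hw : (C.card : ℝ) ≤ 2 * c * d - c) :
    c * (d : ℝ) ^ 2 ≤ (C.offDiag.filter (fun p => ¬ Sh col J j p.1 p.2)).card := by
  have hs : ∀ x y, Sh col J j x y → Sh col J j y x := by
    rintro x y ⟨h, f, h1, h2, h3, h4⟩; exact ⟨h.symm, f, h1, h2, h4, h3⟩
  have hi : ∀ x, ¬ Sh col J j x x := fun x h => h.1 rfl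
  obtain ⟨S, hSC, ⟨σ, hσ⟩, k, r, hkr, hee⟩ := EG C (Sh col J j) hs hi
  obtain ⟨F, hF, hjF, hFc, hFcov⟩ := cover col J j σ S hσ
  have hx : ∀ x : ρ, ∃ f, x ∈ C → f ∈ J ∧ f ≠ j ∧ x ∈ col f := by
    intro x
    by_cases h : x ∈ C
    · have h' := h
      rw [hC, mem_filter] at h'
      obtain ⟨f, hf⟩ := hiso j hj x h'.1 h'.2
      exact ⟨f, fun _ => hf⟩
    · exact ⟨j, fun h' => absurd h' h⟩
  choose g hg using hx
  have hcard : d + 1 ≤ F.card + (C.card - S.card) := by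
    by_contra hlt
    obtain ⟨x, hxT, hxj, hxS⟩ := hD j hj (F ∪ (C \ S).image g) (by
      refine union_subset hF fun f hf => ?_
      obtain ⟨x, hx, rfl⟩ := mem_image.1 hf
      exact (hg x (mem_sdiff.1 hx).1).1) (by
      rw [mem_union]; rintro (h | h)
      · exact hjF h
      · obtain ⟨x, hx, e⟩ := mem_image.1 h
        exact (hg x (mem_sdiff.1 hx).1).2.1 e) (by
      have h1 := card_union_le F ((C \ S).image g)
      have h2 := card_image_le (s := C \ S) (f := g)
      rw [card_sdiff_of_subset hSC] at h2
      omega)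
    have hxC : x ∈ C := by rw [hC, mem_filter]; exact ⟨hxT, hxj⟩
    by_cases hxs : x ∈ S
    · obtain ⟨f, hf, hxf⟩ := hFcov x hxs
      exact hxS f (mem_union_left _ hf) hxf
    · exact hxS (g x) (mem_union_right _ (mem_image_of_mem _ (mem_sdiff.2 ⟨hxC, hxs⟩)))
        (hg x hxC).2.2
  have hSle := card_le_card hSC
  have count : (C.offDiag.filter (fun p => ¬ Sh col J j p.1 p.2)).card + ee (Sh col J j) C C
      = C.card * C.card - C.card := by
    rw [← offDiag_card, ← card_filter_add_card_filter_not (s := C.offDiag)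
      (fun p => Sh col J j p.1 p.2), add_comm]
    congr 1
    unfold ee
    rw [← card_sigma]
    refine card_nbij' (fun p => (p.1, p.2)) (fun p => ⟨p.1, p.2⟩) ?_ ?_ ?_ ?_
    · rintro ⟨x, y⟩ h
      simp only [mem_coe, mem_sigma, mem_filter, mem_offDiag] at h ⊢
      exact ⟨⟨h.1, h.2.1, h.2.2.1⟩, h.2.2⟩
    · rintro ⟨x, y⟩ h
      simp only [mem_coe, mem_sigma, mem_filter, mem_offDiag] at h ⊢
      exact ⟨h.1.1, h.1.2.1, h.2⟩
    · intro p _; rfl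
    · intro p _; rfl
  have hw1 : 1 ≤ C.card := by omega
  have hkw : k ≤ C.card := by omega
  have hcc : C.card ≤ C.card * C.card := Nat.le_mul_self _
  have hA : ((C.offDiag.filter (fun p => ¬ Sh col J j p.1 p.2)).card : ℝ)
      + (ee (Sh col J j) C C : ℝ) = C.card * (C.card - 1) := by
    have := congrArg (Nat.cast : ℕ → ℝ) count
    push_cast [Nat.cast_sub hcc] at this
    linarith
  have hB : (ee (Sh col J j) C C : ℝ) ≤ k * ((C.card : ℝ) - 1) + k * ((C.card : ℝ) - k)
      + r * ((r : ℝ) - 1) + r * ((k : ℝ) + 1) + 2 * r := by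
    have h := (Nat.cast_le (α := ℝ)).2 hee
    have hr1 : ((r * (r - 1) : ℕ) : ℝ) = r * ((r : ℝ) - 1) := by
      cases r with
      | zero => simp
      | succ r => simp
    have := Nat.cast_sub (R := ℝ) hw1
    have := Nat.cast_sub (R := ℝ) hkw
    rw [Nat.cast_add, Nat.cast_add, Nat.cast_add, Nat.cast_add, hr1] at h
    push_cast [Nat.cast_sub hw1, Nat.cast_sub hkw] at h
    linarith
  have hs2 : 2 * ((d : ℝ) + 1) ≤ 2 * C.card - S.card := by
    have : 2 * (d + 1) + S.card ≤ 2 * C.card := by omega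
    have := (Nat.cast_le (α := ℝ)).2 this
    push_cast at this
    linarith
  have := numeric c d C.card S.card k r hc hc1 hc2 (by exact_mod_cast hd) (by positivity)
    (by positivity) (by exact_mod_cast hkr) hs2 hw
  linarith

lemma mainJ {ι ρ : Type*} (col : ι → Finset ρ) (c : ℝ)
    (hc : 12 * c ^ 2 - 15 * c + 4 = 0) (hc1 : 0.86 ≤ c) (hc2 : c ≤ 0.87) :
    ∀ d : ℕ, ∀ J : Finset ι, ∀ T : Finset ρ, T.card < J.card → DJ col d J T →
      c * (d : ℝ) ^ 2 ≤ T.card := by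
  intro d
  induction d with
  | zero => intro J T _ _; simp
  | succ d ihd =>
    intro J
    induction J using Finset.strongInduction with
    | H J ihJ =>
      intro T hTJ hD
      by_cases hiso : ∃ j ∈ J, ∃ x ∈ T, x ∈ col j ∧ ∀ f ∈ J, x ∈ col f → f = j
      · obtain ⟨j, hj, x, hx, hxj, huniq⟩ := hiso
        have hcT := card_erase_of_mem hx
        have hpos := card_pos.2 ⟨x, hx⟩
        have h := ihJ (J.erase j) (erase_ssubset hj) (T.erase x)
          (by rw [card_erase_of_mem hj, hcT]; omega) (by
            intro j' hj' S hS hjS hSc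
            rw [mem_erase] at hj'
            obtain ⟨y, hy, hyj, hyS⟩ := hD j' hj'.2 S (hS.trans (erase_subset _ _)) hjS hSc
            refine ⟨y, mem_erase.2 ⟨?_, hy⟩, hyj, hyS⟩
            rintro rfl
            exact hj'.1 (huniq j' hj'.2 hyj))
        refine h.trans ?_
        exact_mod_cast card_le_card (erase_subset _ _)
      · push Not at hiso
        have hiso' : ∀ j ∈ J, ∀ x ∈ T, x ∈ col j → ∃ f ∈ J, f ≠ j ∧ x ∈ col f := by
          intro j hj x hx hxj
          obtain ⟨f, h1, h2, h3⟩ := hiso j hj x hx hxj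
          exact ⟨f, h1, h3, h2⟩
        by_cases hheavy : ∃ j ∈ J, 2 * c * ((d + 1 : ℕ) : ℝ) - c <
            ((T.filter (· ∈ col j)).card : ℝ)
        · obtain ⟨j, hj, hw⟩ := hheavy
          obtain ⟨x, hx, hxj, -⟩ := hD j hj ∅ (by simp) (by simp) (by simp)
          have hpos : 0 < (T.filter (· ∈ col j)).card :=
            card_pos.2 ⟨x, mem_filter.2 ⟨hx, hxj⟩⟩
          have hsum := card_filter_add_card_filter_not (s := T) (· ∈ col j)
          have h := ihd (J.erase j) (T.filter (fun y => ¬ y ∈ col j))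
            (by rw [card_erase_of_mem hj]; omega) (by
              intro j' hj' S hS hjS hSc
              rw [mem_erase] at hj'
              obtain ⟨y, hy, hyj, hyS⟩ := hD j' hj'.2 (insert j S)
                (insert_subset hj (hS.trans (erase_subset _ _)))
                (by simp [hj'.1, hjS]) ((card_insert_le _ _).trans (by omega))
              exact ⟨y, mem_filter.2 ⟨hy, hyS j (by simp)⟩, hyj,
                fun s hs => hyS s (by simp [hs])⟩)
          have hsum' : ((T.filter (· ∈ col j)).card : ℝ)
            + ((T.filter (fun y => ¬ y ∈ col j)).card : ℝ) = T.card := by exact_mod_cast hsum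
          push_cast at hw ⊢
          nlinarith
        · push Not at hheavy
          have hl := fun j hj => light col (d + 1) (by omega) J T hD hiso' c hc hc1 hc2 j hj
            _ rfl (hheavy j hj)
          set P : ι → Finset (ρ × ρ) := fun j =>
            ((T.filter (· ∈ col j)).offDiag.filter (fun p => ¬ Sh col J j p.1 p.2)) with hP
          have hdisj : (J : Set ι).PairwiseDisjoint P := by
            intro j hj j' hj' hne
            rw [Function.onFun, disjoint_left]
            rintro ⟨x, y⟩ h h'
            simp only [hP, mem_filter, mem_offDiag] at h h'
            exact h.2 ⟨h.1.2.2, j', hj', hne.symm, h'.1.1.2, h'.1.2.1.2⟩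
          have hsub : J.biUnion P ⊆ T.offDiag := by
            rintro ⟨x, y⟩ h
            simp only [mem_biUnion, hP, mem_filter, mem_offDiag] at h ⊢
            obtain ⟨j, -, h, -⟩ := h
            exact ⟨h.1.1, h.2.1.1, h.2.2⟩
          have hle := card_le_card hsub
          rw [card_biUnion hdisj, offDiag_card] at hle
          have h1 : (J.card : ℝ) * (c * ((d + 1 : ℕ) : ℝ) ^ 2) ≤ ∑ j ∈ J, ((P j).card : ℝ) := by
            rw [← nsmul_eq_mul]
            exact card_nsmul_le_sum J _ _ hl
          have h2 : ∑ j ∈ J, ((P j).card : ℝ) ≤ (T.card : ℝ) * T.card := by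
            have : ∑ j ∈ J, (P j).card ≤ T.card * T.card := hle.trans (Nat.sub_le _ _)
            exact_mod_cast this
          have h3 : (T.card : ℝ) + 1 ≤ J.card := by exact_mod_cast hTJ
          by_contra hcon
          push Not at hcon
          have hT : (0 : ℝ) ≤ T.card := by positivity
          nlinarith

end Aux

/-- The minimal number of tests satisfies `t(d,n) ≥ min ((15+√33)/24 · d²) n`. -/
theorem tmin_lower_bound (d n : ℕ) (hd : 1 ≤ d) (hn : 1 ≤ n) :
    min (((15 + Real.sqrt 33) / 24) * (d : ℝ) ^ 2) (n : ℝ) ≤ (tmin d n : ℝ) := by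
  have hne : {t : ℕ | ∃ col : Fin n → Finset (Fin t), Disjunct d col}.Nonempty := by
    refine ⟨n, fun i => {i}, ?_⟩
    intro j S hj _ h
    have := h (mem_singleton_self j)
    simp at this
    exact hj this
  obtain ⟨col, hcol⟩ := Nat.sInf_mem hne
  change Fin n → Finset (Fin (tmin d n)) at col
  by_cases hlt : tmin d n < n
  · refine (min_le_left _ _).trans ?_
    have hsq : Real.sqrt 33 ^ 2 = 33 := Real.sq_sqrt (by norm_num)
    have h1 : 5.74 ≤ Real.sqrt 33 := Real.le_sqrt_of_sq_le (by norm_num)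
    have h2 : Real.sqrt 33 ≤ 5.75 := Real.sqrt_le_iff.2 (by norm_num)
    have := mainJ col ((15 + Real.sqrt 33) / 24) (by linear_combination (1 / 48) * hsq)
      (by linarith) (by linarith) d univ univ (by simpa using hlt) (by
        intro j _ S _ hjS hSc
        by_contra hno
        refine hcol j S hjS hSc fun x hx => ?_
        by_contra hx'
        exact hno ⟨x, mem_univ _, hx, fun s hs hxs => hx' (mem_biUnion.2 ⟨s, hs, hxs⟩)⟩)
    simpa using this
  · refine (min_le_right _ _).trans ?_
    exact_mod_cast not_lt.1 hlt
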